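/- Let V be a vector space over a field K and let T : V → V be an injective linear map. Then there exist subspaces V_b and V_s of V with V = V_b ⊕ V_s (i.e. V_b ∩ V_s = {0} and V_b + V_s = V) such that T(V_b) = V_b — so that T restricts to a linear bijection of V_b onto itself — and ⋂_{n=0}^∞ T^n(V_s) = {0}, i.e. the restriction of T to V_s is a shift. -/

import Mathlib

/-!
The candidate for `V_b` is the intersection of the ranges of all powers of `T`. Since `T` is
injective it commutes with this intersection, and shifting a decreasing sequence of subspaces by one
index does not change its intersection. Any complement `V_s` then works: `⋂ T^n(V_s)` lies in `V_s`
(take `n = 0`) and in every range of a power, so it lies in `V_b ∩ V_s = 0`.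
-/

section Semiring

variable {R M : Type*} [Semiring R] [AddCommMonoid M] [Module R M]

/-- The hyperrange of an endomorphism: the intersection of the ranges of its powers. It is the
bijective summand of the Wold decomposition of an injective endomorphism. -/
def hyperrange (T : Module.End R M) : Submodule R M :=
  ⨅ n : ℕ, LinearMap.range (T ^ n)

/-- An endomorphism is a shift on a submodule `W` if the images of `W` under its powers intersect
trivially. `W` is not required to be invariant. -/
def IsShiftOn (T : Module.End R M) (W : Submodule R M) : Prop :=
  ⨅ n : ℕ, W.map (T ^ n) = ⊥

theorem map_hyperrange_of_injective {T : Module.End R M} (hT : Function.Injective T) :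
    (hyperrange T).map T = hyperrange T := by
  have h_antitone : Antitone fun n : ℕ => LinearMap.range (T ^ n) := T.iterateRange.monotone
  calc (hyperrange T).map T
      = ⨅ n : ℕ, (LinearMap.range (T ^ n)).map T := Submodule.map_iInf T hT
    _ = ⨅ n : ℕ, LinearMap.range (T ^ (n + 1)) := by
      simp only [pow_succ', Module.End.mul_eq_comp, LinearMap.range_comp]
    _ = hyperrange T := h_antitone.iInf_nat_add 1

theorem iInf_map_pow_le_hyperrange (T : Module.End R M) (W : Submodule R M) :
    ⨅ n : ℕ, W.map (T ^ n) ≤ hyperrange T :=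
  iInf_mono fun _ => LinearMap.map_le_range

theorem iInf_map_pow_le_self (T : Module.End R M) (W : Submodule R M) :
    ⨅ n : ℕ, W.map (T ^ n) ≤ W :=
  (iInf_le _ 0).trans_eq <| by rw [pow_zero, Module.End.one_eq_id, Submodule.map_id]

theorem isShiftOn_of_disjoint_hyperrange {T : Module.End R M} {W : Submodule R M}
    (h : Disjoint (hyperrange T) W) : IsShiftOn T W :=
  le_bot_iff.mp <| h (iInf_map_pow_le_hyperrange T W) (iInf_map_pow_le_self T W)

end Semiring

theorem wold_decomposition_vector_space_general
    {R M : Type*} [Ring R] [AddCommGroup M] [Module R M] [IsSemisimpleModule R M]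
    {T : Module.End R M} (hT : Function.Injective T) :
    ∃ Mb Ms : Submodule R M, IsCompl Mb Ms ∧ Mb.map T = Mb ∧ IsShiftOn T Ms := by
  obtain ⟨Ms, h_compl⟩ := exists_isCompl (hyperrange T)
  exact ⟨hyperrange T, Ms, h_compl, map_hyperrange_of_injective hT,
    isShiftOn_of_disjoint_hyperrange h_compl.disjoint⟩

/-- **Wold decomposition for vector spaces.** If `T : V → V` is an injective linear map on a
vector space `V` over a field `K`, then `V` decomposes as `V = V_b ⊕ V_s` where `V_b` satisfies
`T(V_b) = V_b` (so `T` restricts to a linear bijection of `V_b`) and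
`⋂_{n=0}^∞ T^n(V_s) = {0}` (the restriction of `T` to `V_s` is a shift). -/
theorem wold_decomposition_vector_space
    {K V : Type*} [Field K] [AddCommGroup V] [Module K V]
    (T : V →ₗ[K] V) (hT : Function.Injective T) :
    ∃ Vb Vs : Submodule K V,
      Vb ⊓ Vs = ⊥ ∧ Vb ⊔ Vs = ⊤ ∧
      Submodule.map T Vb = Vb ∧
      (⨅ n : ℕ, Submodule.map (T ^ n) Vs) = ⊥ := by
  obtain ⟨Vb, Vs, h_compl, h_map, h_shift⟩ := wold_decomposition_vector_space_general hT
  exact ⟨Vb, Vs, h_compl.inf_eq_bot, h_compl.sup_eq_top, h_map, h_shift⟩
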